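/- arXiv:2303.02557 — 4 statements merged into one kernel-verified Lean document; each statement's English description precedes it below -/
import Mathlib

section
/- Let Q be the optimal Q-function for reward r, let f : ℝ → ℝ satisfy: (1) f is convex; (2i) f(x+y) ≤ f(x) + f(y) for all x, y; (2ii) f(γx) ≤ γ·f(x) for all x, and let Q̃ be the optimal Q-function for reward (s,a) ↦ f(r(s,a)). Define V_f(s) = max_{a∈A} f(Q(s,a)), let C be the optimal Q-function for reward r_C(s,a) = f(r(s,a)) + γ·∑_{s'} p(s'|s,a)·V_f(s') − f(Q(s,a)), and let π_f be the greedy policy π_f(s) ∈ argmax_{a∈A} f(Q(s,a)). Let Q̃^{π_f} be the value of π_f on the transformed task, i.e. the function satisfying Q̃^{π_f}(s,a) = f(r(s,a)) + γ·∑_{s'} p(s'|s,a)·Q̃^{π_f}(s', π_f(s')), and let D satisfy D(s,a) = r_D(s,a) + γ·∑_{s'} p(s'|s,a)·D(s', π_f(s')) where r_D(s,a) = γ·∑_{s'} p(s'|s,a)·[max_{b∈A}(f(Q(s',b)) + C(s',b)) − f(Q(s', π_f(s')))]. Then for all (s,a): Q̃(s,a) − Q̃^{π_f}(s,a) ≤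 D(s,a). -/
/-!
If `M` is a nonnegative matrix with row sums below `1` and `M z ≤ z`, then `z ≥ 0`: a negative
minimum of `z` would be multiplied by a factor below `1`. Hence sub- and supersolutions of the
evaluation equation of a policy are ordered, and so are those of the optimality equation, on
choosing the policy greedy for the subsolution.

By Jensen's inequality `f ∘ Q` is a subsolution of the optimality equation for `f ∘ r`, while the
reward of `C` and the subadditivity of `max` make `f ∘ Q + C` a supersolution of it; so
`f ∘ Q ≤ Q̃ ≤ f ∘ Q + C`. For any policy `π`, the regret `X = Q̃ - Q̃^π` satisfies
`X(s,a) = γ ∑ p(s'|s,a) [max Q̃(s',·) - Q̃(s',π s') + X(s',π s')]`, and the two bounds on `Q̃` make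
it a subsolution of the evaluation equation of `D`.
-/

open Finset

/-- Maximum of a real-valued function over a nonempty finite action set. -/
noncomputable def amax {A : Type*} [Fintype A] [Nonempty A] (g : A → ℝ) : ℝ :=
  Finset.univ.sup' Finset.univ_nonempty g

section Amax

variable {A : Type*} [Fintype A] [Nonempty A]

lemma le_amax (g : A → ℝ) (a : A) : g a ≤ amax g :=
  Finset.le_sup' g (Finset.mem_univ a)

lemma amax_le {g : A → ℝ} {c : ℝ} (h : ∀ a, g a ≤ c) : amax g ≤ c :=
  Finset.sup'_le _ _ fun a _ => h a

lemma amax_mono {g h : A → ℝ} (hgh : ∀ a, g a ≤ h a) : amax g ≤ amax h :=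
  amax_le fun a => (hgh a).trans (le_amax h a)

lemma amax_add_le (g h : A → ℝ) : amax (fun a => g a + h a) ≤ amax g + amax h :=
  amax_le fun a => add_le_add (le_amax g a) (le_amax h a)

lemma exists_amax_eq (g : A → ℝ) : ∃ a, amax g = g a := by
  obtain ⟨a, -, ha⟩ := Finset.exists_mem_eq_sup' Finset.univ_nonempty g
  exact ⟨a, ha⟩

lemma map_amax_le (f : ℝ → ℝ) (g : A → ℝ) : f (amax g) ≤ amax fun a => f (g a) := by
  obtain ⟨a, ha⟩ := exists_amax_eq g
  exact ha ▸ le_amax (fun a => f (g a)) a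

end Amax

lemma nonneg_of_sum_mul_le {ι R : Type*} [Fintype ι] [Ring R] [LinearOrder R]
    [IsStrictOrderedRing R] {M : ι → ι → R} (hM : ∀ i j, 0 ≤ M i j)
    (hsum : ∀ i, ∑ j, M i j < 1) {z : ι → R} (hz : ∀ i, ∑ j, M i j * z j ≤ z i) (i : ι) :
    0 ≤ z i := by
  have : Nonempty ι := ⟨i⟩
  obtain ⟨m, hm⟩ := Finite.exists_min z
  suffices 0 ≤ z m from this.trans (hm i)
  by_contra! hneg
  have : z m < z m := calc
    z m = 1 * z m := (one_mul _).symm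
    _ < (∑ j, M m j) * z m := mul_lt_mul_of_neg_right (hsum m) hneg
    _ = ∑ j, M m j * z m := sum_mul ..
    _ ≤ ∑ j, M m j * z j := sum_le_sum fun j _ => mul_le_mul_of_nonneg_left (hm j) (hM m j)
    _ ≤ z m := hz m
  exact this.false

lemma map_sum_le_of_convexOn_of_sum_le_one {𝕜 E β ι : Type*} [Field 𝕜] [LinearOrder 𝕜]
    [IsStrictOrderedRing 𝕜] [AddCommGroup E] [Module 𝕜 E] [AddCommGroup β] [PartialOrder β]
    [IsOrderedAddMonoid β] [Module 𝕜 β] [IsStrictOrderedModule 𝕜 β] {K : Set E} {f : E → β}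
    (hf : ConvexOn 𝕜 K f) (hK : 0 ∈ K) (hf_zero : f 0 ≤ 0) {t : Finset ι} {w : ι → 𝕜} {x : ι → E}
    (hw : ∀ i ∈ t, 0 ≤ w i) (hsum : ∑ i ∈ t, w i ≤ 1) (hx : ∀ i ∈ t, x i ∈ K) :
    f (∑ i ∈ t, w i • x i) ≤ ∑ i ∈ t, w i • f (x i) := by
  have hrest : 0 ≤ 1 - ∑ i ∈ t, w i := sub_nonneg.2 hsum
  calc f (∑ i ∈ t, w i • x i) = f ((1 - ∑ i ∈ t, w i) • 0 + ∑ i ∈ t, w i • x i) := by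
        rw [smul_zero, zero_add]
    _ ≤ (1 - ∑ i ∈ t, w i) • f 0 + ∑ i ∈ t, w i • f (x i) :=
        hf.map_add_sum_le hw (sub_add_cancel 1 _) hx hrest hK
    _ ≤ ∑ i ∈ t, w i • f (x i) :=
        add_le_of_nonpos_left (smul_nonpos_of_nonneg_of_nonpos hrest hf_zero)

/-- The discounted conditional expectation `V ↦ γ(s,a) ∑ p(s'|s,a) V(s')` of a state function, as a
linear map; the Bellman equations read `Q = r + discountedExp p γ V` with `V` the state value of
`Q`. The discount may depend on the state and the action. -/
def discountedExp {S A : Type*} [Fintype S] (p : S → A → S → ℝ) (γ : S → A → ℝ) :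
    (S → ℝ) →ₗ[ℝ] S → A → ℝ where
  toFun V s a := γ s a * ∑ s', p s a s' * V s'
  map_add' U V := by
    ext s a
    simp only [Pi.add_apply, mul_add, sum_add_distrib]
  map_smul' c V := by
    ext s a
    simp only [Pi.smul_apply, smul_eq_mul, RingHom.id_apply, mul_sum]
    exact sum_congr rfl fun s' _ => by ring

section Bellman

variable {S A : Type*} [Fintype S] {p : S → A → S → ℝ} {γ : S → A → ℝ}

lemma discountedExp_apply (V : S → ℝ) (s : S) (a : A) :
    discountedExp p γ V s a = ∑ s', γ s a * p s a s' * V s' := by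
  simp only [discountedExp, LinearMap.coe_mk, AddHom.coe_mk, mul_sum, mul_assoc]

lemma discountedExp_mono (hp_nonneg : ∀ s a s', 0 ≤ p s a s') (hγ0 : ∀ s a, 0 ≤ γ s a)
    {U V : S → ℝ} (hUV : ∀ s, U s ≤ V s) (s : S) (a : A) :
    discountedExp p γ U s a ≤ discountedExp p γ V s a :=
  mul_le_mul_of_nonneg_left
    (sum_le_sum fun s' _ => mul_le_mul_of_nonneg_left (hUV s') (hp_nonneg s a s')) (hγ0 s a)

lemma sum_discount_mul_kernel (hp_sum : ∀ s a, ∑ s', p s a s' = 1) (s : S) (a : A) :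
    ∑ s', γ s a * p s a s' = γ s a := by
  rw [← mul_sum, hp_sum, mul_one]

lemma map_discountedExp_le (hp_nonneg : ∀ s a s', 0 ≤ p s a s')
    (hp_sum : ∀ s a, ∑ s', p s a s' = 1) (hγ0 : ∀ s a, 0 ≤ γ s a) (hγ1 : ∀ s a, γ s a ≤ 1)
    {f : ℝ → ℝ} (hf_convex : ConvexOn ℝ Set.univ f) (hf_zero : f 0 ≤ 0)
    (V : S → ℝ) (s : S) (a : A) :
    f (discountedExp p γ V s a) ≤ discountedExp p γ (fun s' => f (V s')) s a := by
  simp only [discountedExp_apply]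
  exact map_sum_le_of_convexOn_of_sum_le_one hf_convex (Set.mem_univ 0) hf_zero
    (fun s' _ => mul_nonneg (hγ0 s a) (hp_nonneg s a s'))
    ((sum_discount_mul_kernel hp_sum s a).trans_le (hγ1 s a)) (fun _ _ => Set.mem_univ _)

lemma le_of_policy_sub_super (hp_nonneg : ∀ s a s', 0 ≤ p s a s')
    (hp_sum : ∀ s a, ∑ s', p s a s' = 1) (hγ0 : ∀ s a, 0 ≤ γ s a) (hγ1 : ∀ s a, γ s a < 1)
    {π : S → A} {R U W : S → A → ℝ}
    (hU : ∀ s a, U s a ≤ R s a + discountedExp p γ (fun s' => U s' (π s')) s a)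
    (hW : ∀ s a, R s a + discountedExp p γ (fun s' => W s' (π s')) s a ≤ W s a)
    (s : S) (a : A) : U s a ≤ W s a := by
  have on_policy (s : S) : U s (π s) ≤ W s (π s) := by
    refine sub_nonneg.1 (nonneg_of_sum_mul_le
      (M := fun s s' => γ s (π s) * p s (π s) s') (z := fun s => W s (π s) - U s (π s))
      (fun s s' => mul_nonneg (hγ0 _ _) (hp_nonneg _ _ _))
      (fun s => (sum_discount_mul_kernel hp_sum s (π s)).trans_lt (hγ1 _ _)) (fun s => ?_) s)
    simp only [mul_sub, sum_sub_distrib, ← discountedExp_apply]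
    linarith [hU s (π s), hW s (π s)]
  calc U s a ≤ R s a + discountedExp p γ (fun s' => U s' (π s')) s a := hU s a
    _ ≤ R s a + discountedExp p γ (fun s' => W s' (π s')) s a := by
        gcongr
        exact discountedExp_mono hp_nonneg hγ0 on_policy s a
    _ ≤ W s a := hW s a

variable [Fintype A] [Nonempty A]

lemma le_of_optimality_sub_super (hp_nonneg : ∀ s a s', 0 ≤ p s a s')
    (hp_sum : ∀ s a, ∑ s', p s a s' = 1) (hγ0 : ∀ s a, 0 ≤ γ s a) (hγ1 : ∀ s a, γ s a < 1)
    {R U W : S → A → ℝ}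
    (hU : ∀ s a, U s a ≤ R s a + discountedExp p γ (fun s' => amax (U s')) s a)
    (hW : ∀ s a, R s a + discountedExp p γ (fun s' => amax (W s')) s a ≤ W s a)
    (s : S) (a : A) : U s a ≤ W s a := by
  choose π hπ using fun s => exists_amax_eq (U s)
  simp only [hπ] at hU
  refine le_of_policy_sub_super hp_nonneg hp_sum hγ0 hγ1 hU (fun s a => le_trans ?_ (hW s a)) s a
  gcongr
  exact discountedExp_mono hp_nonneg hγ0 (fun s' => le_amax (W s') (π s')) s a

lemma map_optimal_le_optimal_map (hp_nonneg : ∀ s a s', 0 ≤ p s a s')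
    (hp_sum : ∀ s a, ∑ s', p s a s' = 1) (hγ0 : ∀ s a, 0 ≤ γ s a) (hγ1 : ∀ s a, γ s a < 1)
    {r Q Qt : S → A → ℝ} {f : ℝ → ℝ}
    (hQ : ∀ s a, Q s a = r s a + discountedExp p γ (fun s' => amax (Q s')) s a)
    (hf_convex : ConvexOn ℝ Set.univ f) (hf_subadd : ∀ x y, f (x + y) ≤ f x + f y)
    (hf_zero : f 0 ≤ 0)
    (hQt : ∀ s a, Qt s a = f (r s a) + discountedExp p γ (fun s' => amax (Qt s')) s a)
    (s : S) (a : A) : f (Q s a) ≤ Qt s a := by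
  refine le_of_optimality_sub_super (R := fun s a => f (r s a)) (U := fun s a => f (Q s a))
    hp_nonneg hp_sum hγ0 hγ1 (fun s a => ?_) (fun s a => (hQt s a).ge) s a
  calc f (Q s a) = f (r s a + discountedExp p γ (fun s' => amax (Q s')) s a) := by rw [← hQ]
    _ ≤ f (r s a) + f (discountedExp p γ (fun s' => amax (Q s')) s a) := hf_subadd _ _
    _ ≤ f (r s a) + discountedExp p γ (fun s' => f (amax (Q s'))) s a := by
        gcongr
        exact map_discountedExp_le hp_nonneg hp_sum hγ0 (fun s a => (hγ1 s a).le)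
          hf_convex hf_zero _ s a
    _ ≤ f (r s a) + discountedExp p γ (fun s' => amax fun b => f (Q s' b)) s a := by
        gcongr
        exact discountedExp_mono hp_nonneg hγ0 (fun s' => map_amax_le f (Q s')) s a

lemma optimal_le_add_optimal_residual (hp_nonneg : ∀ s a s', 0 ≤ p s a s')
    (hp_sum : ∀ s a, ∑ s', p s a s' = 1) (hγ0 : ∀ s a, 0 ≤ γ s a) (hγ1 : ∀ s a, γ s a < 1)
    {R g C Q : S → A → ℝ}
    (hQ : ∀ s a, Q s a = R s a + discountedExp p γ (fun s' => amax (Q s')) s a)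
    (hC : ∀ s a, C s a = R s a + discountedExp p γ (fun s' => amax (g s')) s a - g s a +
      discountedExp p γ (fun s' => amax (C s')) s a)
    (s : S) (a : A) : Q s a ≤ g s a + C s a := by
  refine le_of_optimality_sub_super (W := fun s a => g s a + C s a)
    hp_nonneg hp_sum hγ0 hγ1 (fun s a => (hQ s a).le) (fun s a => ?_) s a
  calc R s a + discountedExp p γ (fun s' => amax fun b => g s' b + C s' b) s a
      ≤ R s a + discountedExp p γ ((fun s' => amax (g s')) + fun s' => amax (C s')) s a := by
        gcongr
        exact discountedExp_mono hp_nonneg hγ0 (fun s' => amax_add_le (g s') (C s')) s a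
    _ = g s a + C s a := by
        rw [map_add, Pi.add_apply, Pi.add_apply, hC s a]
        ring

lemma regret_le_of_state_bounds (hp_nonneg : ∀ s a s', 0 ≤ p s a s')
    (hp_sum : ∀ s a, ∑ s', p s a s' = 1) (hγ0 : ∀ s a, 0 ≤ γ s a) (hγ1 : ∀ s a, γ s a < 1)
    {π : S → A} {R Q Qπ D : S → A → ℝ} {lower upper : S → ℝ}
    (hQ : ∀ s a, Q s a = R s a + discountedExp p γ (fun s' => amax (Q s')) s a)
    (hQπ : ∀ s a, Qπ s a = R s a + discountedExp p γ (fun s' => Qπ s' (π s')) s a)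
    (hlower : ∀ s, lower s ≤ Q s (π s)) (hupper : ∀ s, amax (Q s) ≤ upper s)
    (hD : ∀ s a, D s a = discountedExp p γ (fun s' => upper s' - lower s') s a +
      discountedExp p γ (fun s' => D s' (π s')) s a)
    (s : S) (a : A) : Q s a - Qπ s a ≤ D s a := by
  refine le_of_policy_sub_super (U := fun s a => Q s a - Qπ s a)
    hp_nonneg hp_sum hγ0 hγ1 (fun s a => ?_) (fun s a => (hD s a).ge) s a
  calc Q s a - Qπ s a
      = discountedExp p γ ((fun s' => amax (Q s')) - fun s' => Qπ s' (π s')) s a := by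
        rw [map_sub, Pi.sub_apply, Pi.sub_apply, hQ, hQπ]
        ring
    _ ≤ discountedExp p γ
          ((fun s' => upper s' - lower s') + fun s' => Q s' (π s') - Qπ s' (π s')) s a := by
        refine discountedExp_mono hp_nonneg hγ0 (fun s' => ?_) s a
        simp only [Pi.sub_apply, Pi.add_apply]
        linarith [hlower s', hupper s']
    _ = discountedExp p γ (fun s' => upper s' - lower s') s a +
          discountedExp p γ (fun s' => Q s' (π s') - Qπ s' (π s')) s a := by
        rw [map_add, Pi.add_apply, Pi.add_apply]

theorem convex_conditions_regret_standard_rl_general (hp_nonneg : ∀ s a s', 0 ≤ p s a s')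
    (hp_sum : ∀ s a, ∑ s', p s a s' = 1) (hγ0 : ∀ s a, 0 ≤ γ s a) (hγ1 : ∀ s a, γ s a < 1)
    {r Q Qt C Qπ D : S → A → ℝ} {f : ℝ → ℝ} {π : S → A}
    (hQ : ∀ s a, Q s a = r s a + discountedExp p γ (fun s' => amax (Q s')) s a)
    (hf_convex : ConvexOn ℝ Set.univ f) (hf_subadd : ∀ x y, f (x + y) ≤ f x + f y)
    (hf_zero : f 0 ≤ 0)
    (hQt : ∀ s a, Qt s a = f (r s a) + discountedExp p γ (fun s' => amax (Qt s')) s a)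
    (hC : ∀ s a, C s a =
      f (r s a) + discountedExp p γ (fun s' => amax fun b => f (Q s' b)) s a - f (Q s a) +
        discountedExp p γ (fun s' => amax (C s')) s a)
    (hQπ : ∀ s a, Qπ s a = f (r s a) + discountedExp p γ (fun s' => Qπ s' (π s')) s a)
    (hD : ∀ s a, D s a =
      discountedExp p γ (fun s' => amax (fun b => f (Q s' b) + C s' b) - f (Q s' (π s'))) s a +
        discountedExp p γ (fun s' => D s' (π s')) s a)
    (s : S) (a : A) : Qt s a - Qπ s a ≤ D s a := by
  have lower : ∀ s a, f (Q s a) ≤ Qt s a :=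
    map_optimal_le_optimal_map hp_nonneg hp_sum hγ0 hγ1 hQ hf_convex hf_subadd hf_zero hQt
  have upper : ∀ s a, Qt s a ≤ f (Q s a) + C s a :=
    optimal_le_add_optimal_residual (R := fun s a => f (r s a)) (g := fun s a => f (Q s a))
      hp_nonneg hp_sum hγ0 hγ1 hQt hC
  exact regret_le_of_state_bounds (R := fun s a => f (r s a)) hp_nonneg hp_sum hγ0 hγ1 hQt hQπ
    (fun s' => lower s' (π s')) (fun s' => amax_mono (upper s')) hD s a

end Bellman

/-- **Regret bound for the zero-shot greedy policy, convex conditions, standard RL (Lemma 4.2).** -/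
theorem convex_conditions_regret_standard_rl
    {S A : Type*} [Fintype S] [Fintype A] [Nonempty S] [Nonempty A]
    (p : S → A → S → ℝ)
    (hp_nonneg : ∀ s a s', 0 ≤ p s a s')
    (hp_sum : ∀ s a, ∑ s', p s a s' = 1)
    (γ : ℝ) (hγ0 : 0 < γ) (hγ1 : γ < 1)
    (r : S → A → ℝ)
    -- Q is the optimal Q-function for reward r
    (Q : S → A → ℝ)
    (hQ : ∀ s a, Q s a = r s a + γ * ∑ s', p s a s' * amax (fun a' => Q s' a'))
    -- the transformation function f and its conditions
    (f : ℝ → ℝ)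
    (hf_convex : ConvexOn ℝ Set.univ f)
    (hf_subadd : ∀ x y, f (x + y) ≤ f x + f y)
    (hf_subhom : ∀ x, f (γ * x) ≤ γ * f x)
    -- Q̃ is the optimal Q-function for the transformed reward f ∘ r
    (Qt : S → A → ℝ)
    (hQt : ∀ s a, Qt s a = f (r s a) + γ * ∑ s', p s a s' * amax (fun a' => Qt s' a'))
    -- V_f, the auxiliary reward r_C, and C the optimal Q-function for r_C
    (Vf : S → ℝ)
    (hVf : ∀ s, Vf s = amax (fun a => f (Q s a)))
    (rC : S → A → ℝ)
    (hrC : ∀ s a, rC s a = f (r s a) + γ * (∑ s', p s a s' * Vf s') - f (Q s a))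
    (C : S → A → ℝ)
    (hC : ∀ s a, C s a = rC s a + γ * ∑ s', p s a s' * amax (fun a' => C s' a'))
    -- π_f is the greedy policy w.r.t. f(Q(s,·))
    (πf : S → A)
    (hπf : ∀ s a, f (Q s a) ≤ f (Q s (πf s)))
    -- Q̃^{π_f} is the value of π_f on the transformed task
    (Qpf : S → A → ℝ)
    (hQpf : ∀ s a, Qpf s a = f (r s a) + γ * ∑ s', p s a s' * Qpf s' (πf s'))
    -- the auxiliary reward r_D and the value D of π_f in the task with reward r_D
    (rD : S → A → ℝ)
    (hrD : ∀ s a, rD s a = γ * ∑ s', p s a s' *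
      (amax (fun b => f (Q s' b) + C s' b) - f (Q s' (πf s'))))
    (D : S → A → ℝ)
    (hD : ∀ s a, D s a = rD s a + γ * ∑ s', p s a s' * D s' (πf s')) :
    ∀ s a, Qt s a - Qpf s a ≤ D s a := by
  obtain rfl := funext hVf
  obtain rfl := funext₂ hrC
  obtain rfl := funext₂ hrD
  have hf_zero : f 0 ≤ 0 := by
    have hf_scaled := hf_subhom 0
    rw [mul_zero] at hf_scaled
    nlinarith
  exact convex_conditions_regret_standard_rl_general hp_nonneg hp_sum (fun _ _ => hγ0.le)
    (fun _ _ => hγ1) hQ hf_convex hf_subadd hf_zero hQt hC hQpf hD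
end

section
/- Let Q be the optimal soft Q-function for reward r, and let f : ℝ → ℝ satisfy: (1) f is convex; (2i) f(x+y) ≤ f(x) + f(y) for all x, y; (2ii) f(γx) ≤ γ·f(x) for all x; (3) f(log ∑_{a} π₀(a|s)·exp 𝒬(s,a)) ≤ log ∑_{a} π₀(a|s)·exp f(𝒬(s,a)) for every function 𝒬 : S × A → ℝ and every s ∈ S. Define V_f(s) = log ∑_{a} π₀(a|s)·exp f(Q(s,a)) and r_C(s,a) = f(r(s,a)) + γ·∑_{s'} p(s'|s,a)·V_f(s') − f(Q(s,a)), and let C be the function satisfying C(s,a) = r_C(s,a) + γ·∑_{s'} p(s'|s,a)·max_{a'∈A} C(s',a'). If Q̃ is the optimal soft Q-function for the transformed reward (s,a) ↦ f(r(s,a)), then for all (s,a): f(Q(s,a)) ≤ Q̃(s,a) ≤ f(Q(s,a)) + C(s,a). -/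
/-!
Log-sum-exp with positive weights and averaging against a probability vector are both monotone and
commute with adding constants. A Bellman operator `T` built from such maps therefore sends
`q ≤ q' + c` to `T q ≤ T q' + γ * c`. If `q ≤ T q` and `T q' ≤ q'`, taking `c` to be the maximum of
`q - q'` gives `c ≤ γ * c`, hence `c ≤ 0` and `q ≤ q'`.

Apply this comparison principle to the operator `T` with reward `f ∘ r`, whose fixed point is `Qt`.
The conditions on `f` give `f ∘ Q ≤ T (f ∘ Q)`, which is the lower bound. The correction `C` is the
optimal value for the residual reward `T (f ∘ Q) - f ∘ Q`; since the soft value of `f ∘ Q + C` is at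
most that of `f ∘ Q` plus `max C`, it satisfies `T (f ∘ Q + C) ≤ f ∘ Q + C`, which is the upper
bound.
-/

open Finset

/-- The soft (log-sum-exp) value of `g` under the prior action distribution `π0`. -/
noncomputable def softV {A : Type*} [Fintype A] (π0 : A → ℝ) (g : A → ℝ) : ℝ :=
  Real.log (∑ a, π0 a * Real.exp (g a))

/-- Topical maps: monotone real-valued maps commuting with the addition of constants. This is all
that the comparison principle needs to know about a state-value functional such as `softV`. -/
structure IsTopical {X : Type*} (F : (X → ℝ) → ℝ) : Prop where
  monotone : Monotone F
  map_add_const : ∀ (g : X → ℝ) (c : ℝ), F (fun x => g x + c) = F g + c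

lemma IsTopical.le_add {X : Type*} {F : (X → ℝ) → ℝ} (hF : IsTopical F) {g h : X → ℝ} {c : ℝ}
    (hgh : ∀ x, g x ≤ h x + c) : F g ≤ F h + c :=
  (hF.monotone hgh).trans_eq (hF.map_add_const h c)

lemma isTopical_sum_mul {X : Type*} [Fintype X] {w : X → ℝ} (hw : w ∈ stdSimplex ℝ X) :
    IsTopical fun g : X → ℝ => ∑ x, w x * g x where
  monotone _ _ hgh := sum_le_sum fun x _ => mul_le_mul_of_nonneg_left (hgh x) (hw.1 x)
  map_add_const g c := by
    simp only [mul_add, sum_add_distrib, ← sum_mul, hw.2, one_mul]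

lemma sum_mul_exp_pos {X : Type*} [Fintype X] {w : X → ℝ} (hw : 0 < w) (g : X → ℝ) :
    0 < ∑ x, w x * Real.exp (g x) := by
  obtain ⟨hw_nonneg, x, hx⟩ := Pi.lt_def.1 hw
  exact sum_pos' (fun y _ => mul_nonneg (hw_nonneg y) (Real.exp_pos _).le)
    ⟨x, mem_univ x, mul_pos hx (Real.exp_pos _)⟩

lemma isTopical_softV {X : Type*} [Fintype X] {w : X → ℝ} (hw : 0 < w) : IsTopical (softV w) where
  monotone g h hgh := Real.log_le_log (sum_mul_exp_pos hw g) <|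
    sum_le_sum fun x _ => mul_le_mul_of_nonneg_left (Real.exp_le_exp.2 (hgh x)) (hw.le x)
  map_add_const g c := by
    simp only [softV, Real.exp_add, ← mul_assoc, ← sum_mul]
    rw [Real.log_mul (sum_mul_exp_pos hw g).ne' (Real.exp_pos c).ne', Real.log_exp]

lemma nonpos_of_forall_le_mul {X : Type*} [Finite X] {γ : ℝ} (hγ1 : γ < 1) {d : X → ℝ}
    (hd : ∀ M, (∀ x, d x ≤ M) → ∀ x, d x ≤ γ * M) (x : X) : d x ≤ 0 := by
  have : Nonempty X := ⟨x⟩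
  obtain ⟨y, hy⟩ := Finite.exists_max d
  have hy_contract : d y ≤ γ * d y := hd (d y) hy y
  have hy_nonpos : d y ≤ 0 := by nlinarith
  exact (hy x).trans hy_nonpos

/-- The Bellman operator with transition kernel `p`, discount `γ` and reward `r`, acting on
state-action values. The functional `V s` turns the action values at `s` into a state value, so that
`V s = softV (π0 s)` is the entropy-regularized case and `V s = amax` the unregularized one. -/
def bellman {S A : Type*} [Fintype S] (p : S → A → S → ℝ) (γ : ℝ) (V : S → (A → ℝ) → ℝ)
    (r q : S → A → ℝ) : S → A → ℝ :=
  fun s a => r s a + γ * ∑ s', p s a s' * V s' (q s')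

section Bellman

variable {S A : Type*} [Fintype S] {p : S → A → S → ℝ} {γ : ℝ} {V : S → (A → ℝ) → ℝ}
  {r q q' Q : S → A → ℝ}

lemma bellman_le_bellman_add (hp : ∀ s a, p s a ∈ stdSimplex ℝ S) (hγ0 : 0 ≤ γ)
    (hV : ∀ s, IsTopical (V s)) {c : ℝ} (hqq' : ∀ s a, q s a ≤ q' s a + c) (s : S) (a : A) :
    bellman p γ V r q s a ≤ bellman p γ V r q' s a + γ * c := by
  have h_mean : ∑ s', p s a s' * V s' (q s') ≤ ∑ s', p s a s' * V s' (q' s') + c :=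
    (isTopical_sum_mul (hp s a)).le_add fun s' => (hV s').le_add (hqq' s')
  calc bellman p γ V r q s a
      ≤ r s a + γ * (∑ s', p s a s' * V s' (q' s') + c) := by unfold bellman; gcongr
    _ = bellman p γ V r q' s a + γ * c := by unfold bellman; ring

lemma le_of_le_bellman_of_bellman_le [Finite A] (hp : ∀ s a, p s a ∈ stdSimplex ℝ S)
    (hγ0 : 0 ≤ γ) (hγ1 : γ < 1) (hV : ∀ s, IsTopical (V s))
    (hq : q ≤ bellman p γ V r q) (hq' : bellman p γ V r q' ≤ q') : q ≤ q' := by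
  refine fun s a => sub_nonpos.1 <| nonpos_of_forall_le_mul hγ1
    (d := fun x : S × A => q x.1 x.2 - q' x.1 x.2) (fun M hM x => ?_) (s, a)
  have h_backup := bellman_le_bellman_add (r := r) hp hγ0 hV
    (fun s a => sub_le_iff_le_add'.1 (hM (s, a))) x.1 x.2
  linarith [hq x.1 x.2, hq' x.1 x.2]

lemma comp_le_bellman_comp (hp : ∀ s a, p s a ∈ stdSimplex ℝ S) (hγ0 : 0 ≤ γ)
    (hQ : Q = bellman p γ V r Q) {f : ℝ → ℝ} (hf_convex : ConvexOn ℝ Set.univ f)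
    (hf_subadd : ∀ x y, f (x + y) ≤ f x + f y) (hf_subhom : ∀ x, f (γ * x) ≤ γ * f x)
    (hfV : ∀ s, f (V s (Q s)) ≤ V s (f ∘ Q s)) :
    (f ∘ Q ·) ≤ bellman p γ V (f ∘ r ·) (f ∘ Q ·) := by
  intro s a
  have h_jensen : f (∑ s', p s a s' * V s' (Q s')) ≤ ∑ s', p s a s' * f (V s' (Q s')) :=
    hf_convex.map_sum_le (fun s' _ => (hp s a).1 s') (hp s a).2 fun _ _ => Set.mem_univ _
  calc f (Q s a)
      = f (r s a + γ * ∑ s', p s a s' * V s' (Q s')) := congrArg f (congrFun₂ hQ s a)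
    _ ≤ f (r s a) + f (γ * ∑ s', p s a s' * V s' (Q s')) := hf_subadd _ _
    _ ≤ f (r s a) + γ * f (∑ s', p s a s' * V s' (Q s')) := by gcongr; exact hf_subhom _
    _ ≤ f (r s a) + γ * ∑ s', p s a s' * f (V s' (Q s')) := by gcongr
    _ ≤ f (r s a) + γ * ∑ s', p s a s' * V s' (f ∘ Q s') := by
        gcongr with s'
        · exact (hp s a).1 s'
        · exact hfV s'

lemma bellman_add_le_add [Fintype A] [Nonempty A] (hp : ∀ s a s', 0 ≤ p s a s') (hγ0 : 0 ≤ γ)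
    (hV : ∀ s, IsTopical (V s)) {C : S → A → ℝ}
    (hC : bellman p γ (fun _ => amax) (bellman p γ V r q - q) C ≤ C) :
    bellman p γ V r (q + C) ≤ q + C := by
  intro s a
  have h_value (s' : S) : V s' ((q + C) s') ≤ V s' (q s') + amax (C s') :=
    (hV s').le_add fun a' => add_le_add_right (le_sup' (C s') (mem_univ a')) _
  calc bellman p γ V r (q + C) s a
      ≤ r s a + γ * ∑ s', p s a s' * (V s' (q s') + amax (C s')) := by
        unfold bellman
        gcongr with s'
        · exact hp s a s'
        · exact h_value s'
    _ = q s a + bellman p γ (fun _ => amax) (bellman p γ V r q - q) C s a := by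
        simp only [bellman, Pi.sub_apply, mul_add, sum_add_distrib]
        ring
    _ ≤ q s a + C s a := add_le_add_right (hC s a) _

end Bellman

theorem convex_conditions_entreg_rl_general {S A : Type*} [Fintype S] [Fintype A] [Nonempty A]
    {p : S → A → S → ℝ} (hp : ∀ s a, p s a ∈ stdSimplex ℝ S)
    {γ : ℝ} (hγ0 : 0 ≤ γ) (hγ1 : γ < 1)
    {V : S → (A → ℝ) → ℝ} (hV : ∀ s, IsTopical (V s))
    {r Q : S → A → ℝ} (hQ : Q = bellman p γ V r Q)
    {f : ℝ → ℝ} (hf_convex : ConvexOn ℝ Set.univ f)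
    (hf_subadd : ∀ x y, f (x + y) ≤ f x + f y) (hf_subhom : ∀ x, f (γ * x) ≤ γ * f x)
    (hfV : ∀ s, f (V s (Q s)) ≤ V s (f ∘ Q s))
    {C : S → A → ℝ}
    (hC : C = bellman p γ (fun _ => amax) (bellman p γ V (f ∘ r ·) (f ∘ Q ·) - (f ∘ Q ·)) C)
    {Qt : S → A → ℝ} (hQt : Qt = bellman p γ V (f ∘ r ·) Qt) (s : S) (a : A) :
    f (Q s a) ≤ Qt s a ∧ Qt s a ≤ f (Q s a) + C s a := by
  have h_sub : (f ∘ Q ·) ≤ bellman p γ V (f ∘ r ·) (f ∘ Q ·) :=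
    comp_le_bellman_comp hp hγ0 hQ hf_convex hf_subadd hf_subhom hfV
  have h_super : bellman p γ V (f ∘ r ·) ((f ∘ Q ·) + C) ≤ (f ∘ Q ·) + C :=
    bellman_add_le_add (fun s a => (hp s a).1) hγ0 hV hC.ge
  exact ⟨le_of_le_bellman_of_bellman_le hp hγ0 hγ1 hV h_sub hQt.ge s a,
    le_of_le_bellman_of_bellman_le hp hγ0 hγ1 hV hQt.le h_super s a⟩

/-- **Convex conditions, entropy-regularized RL (Lemma 5.1).** -/
theorem convex_conditions_entreg_rl
    {S A : Type*} [Fintype S] [Fintype A] [Nonempty S] [Nonempty A]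
    (p : S → A → S → ℝ)
    (hp_nonneg : ∀ s a s', 0 ≤ p s a s')
    (hp_sum : ∀ s a, ∑ s', p s a s' = 1)
    (γ : ℝ) (hγ0 : 0 < γ) (hγ1 : γ < 1)
    -- prior policy
    (π0 : S → A → ℝ)
    (hπ0_pos : ∀ s a, 0 < π0 s a)
    (hπ0_sum : ∀ s, ∑ a, π0 s a = 1)
    (r : S → A → ℝ)
    -- Q is the optimal soft Q-function for reward r
    (Q : S → A → ℝ)
    (hQ : ∀ s a, Q s a = r s a + γ * ∑ s', p s a s' * softV (π0 s') (fun a' => Q s' a'))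
    -- the transformation function f and its conditions
    (f : ℝ → ℝ)
    (hf_convex : ConvexOn ℝ Set.univ f)
    (hf_subadd : ∀ x y, f (x + y) ≤ f x + f y)
    (hf_subhom : ∀ x, f (γ * x) ≤ γ * f x)
    (hf_lse : ∀ (𝒬 : S → A → ℝ) (s : S),
      f (softV (π0 s) (fun a => 𝒬 s a)) ≤ softV (π0 s) (fun a => f (𝒬 s a)))
    -- V_f, the auxiliary reward r_C, and the fixed point C
    (Vf : S → ℝ)
    (hVf : ∀ s, Vf s = softV (π0 s) (fun a => f (Q s a)))
    (rC : S → A → ℝ)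
    (hrC : ∀ s a, rC s a = f (r s a) + γ * (∑ s', p s a s' * Vf s') - f (Q s a))
    (C : S → A → ℝ)
    (hC : ∀ s a, C s a = rC s a + γ * ∑ s', p s a s' * amax (fun a' => C s' a'))
    -- Q̃ is the optimal soft Q-function for the transformed reward f ∘ r
    (Qt : S → A → ℝ)
    (hQt : ∀ s a, Qt s a = f (r s a) + γ * ∑ s', p s a s' * softV (π0 s') (fun a' => Qt s' a')) :
    ∀ s a, f (Q s a) ≤ Qt s a ∧ Qt s a ≤ f (Q s a) + C s a := by
  obtain rfl := funext hVf
  obtain rfl := funext₂ hrC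
  exact convex_conditions_entreg_rl_general (fun s a => ⟨hp_nonneg s a, hp_sum s a⟩) hγ0.le hγ1
    (fun s => isTopical_softV (StrongLT.lt (hπ0_pos s))) (funext₂ hQ) hf_convex hf_subadd hf_subhom
    (hf_lse Q) (funext₂ hC) (funext₂ hQt)
end

section
/- For k = 1, …, M (with M ≥ 1), let Q^(k) be the optimal Q-function for reward r^(k). If Q̃ is the optimal Q-function for the OR-composite reward (s,a) ↦ max_{1≤k≤M} r^(k)(s,a), then for all (s,a): Q̃(s,a) ≥ max_{1≤k≤M} Q^(k)(s,a). -/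
/-!
The Bellman optimality operator is monotone in its argument and in the reward, and raising its
argument by a constant `c ≥ 0` raises its value by at most `γ * c` (Blackwell's conditions). For
such an operator a subsolution `f` lies below every supersolution `g`: with `D = sup (f - g)` we
have `f ≤ g + D`, and if `D` were positive, one application of the operator would improve this to
`f ≤ g + γ * D`, whence `D ≤ γ * D`, which is impossible. Each primitive optimal Q-function is a
subsolution for the composite reward.
-/

open Finset

section Amax

variable {ι : Type*} [Fintype ι] [Nonempty ι]

theorem le_amax_s12 (g : ι → ℝ) (i : ι) : g i ≤ amax g :=
  le_sup' g (mem_univ i)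

theorem amax_le_iff {g : ι → ℝ} {c : ℝ} : amax g ≤ c ↔ ∀ i, g i ≤ c := by
  simp [amax]

theorem amax_mono_s12 : Monotone (amax : (ι → ℝ) → ℝ) :=
  fun _ _ h => sup'_mono_fun fun i _ => h i

theorem amax_add_const (g : ι → ℝ) (c : ℝ) : amax (fun i => g i + c) = amax g + c :=
  (sup'_add univ g c univ_nonempty).symm

end Amax

theorem le_of_le_map_of_map_le {X : Type*} {T : (X → ℝ) → X → ℝ} {γ : ℝ} (hγ : γ < 1)
    (hT : Monotone T) (hT_add : ∀ f c, 0 ≤ c → ∀ x, T (fun y => f y + c) x ≤ T f x + γ * c)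
    {f g : X → ℝ} (hfg : BddAbove (Set.range (f - g))) (hf : f ≤ T f) (hg : T g ≤ g) :
    f ≤ g := by
  intro x
  have : Nonempty X := ⟨x⟩
  set D := ⨆ y, (f - g) y
  have hle : ∀ y, f y ≤ g y + D := fun y => sub_le_iff_le_add'.mp (le_ciSup hfg y)
  suffices hD : D ≤ 0 by linarith [hle x]
  by_contra! hD
  have himproved : ∀ y, f y ≤ g y + γ * D := fun y =>
    calc f y ≤ T f y := hf y
      _ ≤ T (fun z => g z + D) y := hT hle y
      _ ≤ T g y + γ * D := hT_add g D hD.le y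
      _ ≤ g y + γ * D := by gcongr; exact hg y
  have hcontr : D ≤ γ * D := ciSup_le fun y => sub_le_iff_le_add'.mpr (himproved y)
  exact hcontr.not_gt (mul_lt_of_lt_one_left hD hγ)

section Bellman

variable {S A : Type*} [Fintype S] [Fintype A] [Nonempty A]

/-- The Bellman optimality operator, whose fixed points are the optimal Q-functions for the
reward `r`. Kernel, reward and Q-function take state-action pairs as arguments. -/
noncomputable def bellmanOperator (p : S × A → S → ℝ) (γ : ℝ) (r Q : S × A → ℝ) (x : S × A) : ℝ :=
  r x + γ * ∑ s', p x s' * amax (fun a' => Q (s', a'))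

variable {p : S × A → S → ℝ} {γ : ℝ}

theorem bellmanOperator_mono_reward {r r' : S × A → ℝ} (hr : r ≤ r') (Q : S × A → ℝ) :
    bellmanOperator p γ r Q ≤ bellmanOperator p γ r' Q :=
  fun x => add_le_add_left (hr x) _

theorem bellmanOperator_mono (hp_nonneg : ∀ x s', 0 ≤ p x s') (hγ : 0 ≤ γ) (r : S × A → ℝ) :
    Monotone (bellmanOperator p γ r) := by
  intro Q Q' hQ x
  unfold bellmanOperator
  gcongr with s'
  · exact hp_nonneg x s'
  · exact amax_mono_s12 fun a' => hQ (s', a')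

theorem bellmanOperator_add_const_le (hp_sum : ∀ x, ∑ s', p x s' ≤ 1) (hγ : 0 ≤ γ)
    (r Q : S × A → ℝ) {c : ℝ} (hc : 0 ≤ c) (x : S × A) :
    bellmanOperator p γ r (fun y => Q y + c) x ≤ bellmanOperator p γ r Q x + γ * c :=
  calc bellmanOperator p γ r (fun y => Q y + c) x
      = bellmanOperator p γ r Q x + γ * ((∑ s', p x s') * c) := by
        simp only [bellmanOperator, amax_add_const, mul_add, sum_add_distrib, sum_mul, add_assoc]
    _ ≤ bellmanOperator p γ r Q x + γ * c := by
        gcongr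
        exact mul_le_of_le_one_left hc (hp_sum x)

theorem le_of_le_bellmanOperator_of_bellmanOperator_le (hp_nonneg : ∀ x s', 0 ≤ p x s')
    (hp_sum : ∀ x, ∑ s', p x s' ≤ 1) (hγ0 : 0 ≤ γ) (hγ1 : γ < 1) {r r' Q Q' : S × A → ℝ}
    (hr : r ≤ r') (hQ : Q ≤ bellmanOperator p γ r Q) (hQ' : bellmanOperator p γ r' Q' ≤ Q') :
    Q ≤ Q' :=
  le_of_le_map_of_map_le hγ1 (bellmanOperator_mono hp_nonneg hγ0 r')
    (fun f _ hc => bellmanOperator_add_const_le hp_sum hγ0 r' f hc)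
    (Set.finite_range _).bddAbove (hQ.trans (bellmanOperator_mono_reward hr Q)) hQ'

end Bellman

theorem or_composition_standard_rl_general
    {S A ι : Type*} [Fintype S] [Fintype A] [Nonempty A] [Fintype ι] [Nonempty ι]
    (p : S → A → S → ℝ)
    (hp_nonneg : ∀ s a s', 0 ≤ p s a s')
    -- the missing probability mass is that of termination, after which no reward is collected
    (hp_sum : ∀ s a, ∑ s', p s a s' ≤ 1)
    (γ : ℝ) (hγ0 : 0 ≤ γ) (hγ1 : γ < 1)
    (r Q : ι → S → A → ℝ)
    (hQ : ∀ k s a, Q k s a = r k s a + γ * ∑ s', p s a s' * amax (fun a' => Q k s' a'))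
    (Qt : S → A → ℝ)
    (hQt : ∀ s a, Qt s a = amax (fun k => r k s a)
      + γ * ∑ s', p s a s' * amax (fun a' => Qt s' a')) :
    ∀ s a, amax (fun k => Q k s a) ≤ Qt s a := by
  intro s a
  refine amax_le_iff.mpr fun k => ?_
  have hr : (fun x : S × A => r k x.1 x.2) ≤ fun x => amax (fun j => r j x.1 x.2) :=
    fun x => le_amax_s12 (fun j => r j x.1 x.2) k
  exact le_of_le_bellmanOperator_of_bellmanOperator_le
    (p := fun x => p x.1 x.2) (Q := fun x => Q k x.1 x.2) (Q' := fun x => Qt x.1 x.2)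
    (fun x => hp_nonneg x.1 x.2) (fun x => hp_sum x.1 x.2) hγ0 hγ1 hr
    (fun x => (hQ k x.1 x.2).le) (fun x => (hQt x.1 x.2).ge) (s, a)

/-- **OR composition, standard RL:** the optimal Q-function of the max-composite reward
dominates the max of the primitive optimal Q-functions. -/
theorem or_composition_standard_rl
    {S A : Type*} [Fintype S] [Fintype A] [Nonempty S] [Nonempty A]
    (p : S → A → S → ℝ)
    (hp_nonneg : ∀ s a s', 0 ≤ p s a s')
    (hp_sum : ∀ s a, ∑ s', p s a s' = 1)
    (γ : ℝ) (hγ0 : 0 < γ) (hγ1 : γ < 1)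
    (M : ℕ) [NeZero M]
    (r : Fin M → S → A → ℝ)
    -- Q k is the optimal Q-function for reward r k
    (Q : Fin M → S → A → ℝ)
    (hQ : ∀ k s a, Q k s a = r k s a + γ * ∑ s', p s a s' * amax (fun a' => Q k s' a'))
    -- Q̃ is the optimal Q-function for the OR-composite reward
    (Qt : S → A → ℝ)
    (hQt : ∀ s a, Qt s a = amax (fun k => r k s a)
      + γ * ∑ s', p s a s' * amax (fun a' => Qt s' a')) :
    ∀ s a, amax (fun k => Q k s a) ≤ Qt s a :=
  or_composition_standard_rl_general p hp_nonneg (fun s a => (hp_sum s a).le) γ hγ0.le hγ1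
    r Q hQ Qt hQt
end

section
/- For k = 1, …, M (with M ≥ 1), let Q^(k) be the optimal soft Q-function for reward r^(k). If Q̃ is the optimal soft Q-function for the OR-composite reward (s,a) ↦ max_{1≤k≤M} r^(k)(s,a), then Q̃(s,a) ≥ max_{1≤k≤M} Q^(k)(s,a) for all (s,a); and if Q̃' is the optimal soft Q-function for the AND-composite reward (s,a) ↦ min_{1≤k≤M} r^(k)(s,a), then Q̃'(s,a) ≤ min_{1≤k≤M} Q^(k)(s,a) for all (s,a). -/
open Finset

/-- Minimum of a real-valued function over a nonempty finite (index) set. -/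
noncomputable def amin {A : Type*} [Fintype A] [Nonempty A] (g : A → ℝ) : ℝ :=
  Finset.univ.inf' Finset.univ_nonempty g

/-!
Log-sum-exp is monotone and commutes with adding constants, so a bound `Q₁ ≤ Q₂ + d` between a
subsolution `Q₁` and a supersolution `Q₂` of the soft Bellman equation improves to
`Q₁ ≤ Q₂ + γ * d`. As `γ < 1`, the supremum of `Q₁ - Q₂` cannot be positive, so the optimal soft
Q-function is monotone in the reward. Each `r k` lies between the AND- and the OR-composite reward.
-/

lemma le_of_forall_le_add_imp_le_add_mul {X : Type*} {f g : X → ℝ} {c : ℝ} (hc : c < 1)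
    (hbdd : BddAbove (Set.range (f - g)))
    (himp : ∀ d, 0 ≤ d → (∀ x, f x ≤ g x + d) → ∀ x, f x ≤ g x + c * d) : f ≤ g := by
  intro x
  by_contra! hx
  have : Nonempty X := ⟨x⟩
  set d := ⨆ y, (f - g) y
  have hd : 0 < d := (sub_pos.2 hx).trans_le (le_ciSup hbdd x)
  have hfg : ∀ y, f y ≤ g y + d := fun y => sub_le_iff_le_add'.1 (le_ciSup hbdd y)
  have hdc : d ≤ c * d := ciSup_le fun y => sub_le_iff_le_add'.2 (himp d hd.le hfg y)
  exact hdc.not_gt (mul_lt_of_lt_one_left hd hc)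

lemma sum_mul_le_sum_mul_add {S : Type*} [Fintype S] {w f g : S → ℝ} {d : ℝ}
    (hw : ∀ s, 0 ≤ w s) (hw_sum : ∑ s, w s ≤ 1) (hd : 0 ≤ d) (hfg : ∀ s, f s ≤ g s + d) :
    ∑ s, w s * f s ≤ ∑ s, w s * g s + d :=
  calc ∑ s, w s * f s
      ≤ ∑ s, w s * (g s + d) := sum_le_sum fun s _ => mul_le_mul_of_nonneg_left (hfg s) (hw s)
    _ = ∑ s, w s * g s + (∑ s, w s) * d := by simp only [mul_add, sum_add_distrib, sum_mul]
    _ ≤ ∑ s, w s * g s + d := by gcongr; exact mul_le_of_le_one_left hd hw_sum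

section SoftValue

variable {A : Type*} [Fintype A] {π0 g h : A → ℝ}

lemma sum_mul_exp_pos_s16 (hπ0 : ∀ a, 0 ≤ π0 a) (hπ0_sum : 0 < ∑ a, π0 a) (g : A → ℝ) :
    0 < ∑ a, π0 a * Real.exp (g a) := by
  obtain ⟨a, ha, hπ0a⟩ := (sum_pos_iff_of_nonneg fun a _ => hπ0 a).1 hπ0_sum
  exact sum_pos' (fun b _ => mul_nonneg (hπ0 b) (Real.exp_nonneg _))
    ⟨a, ha, mul_pos hπ0a (Real.exp_pos _)⟩

lemma softV_mono (hπ0 : ∀ a, 0 ≤ π0 a) (hπ0_sum : 0 < ∑ a, π0 a) : Monotone (softV π0) :=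
  fun g _ hgh => Real.log_le_log (sum_mul_exp_pos_s16 hπ0 hπ0_sum g) <|
    sum_le_sum fun a _ => mul_le_mul_of_nonneg_left (Real.exp_le_exp.2 (hgh a)) (hπ0 a)

lemma softV_add_const (hπ0 : ∀ a, 0 ≤ π0 a) (hπ0_sum : 0 < ∑ a, π0 a) (g : A → ℝ) (d : ℝ) :
    softV π0 (fun a => g a + d) = softV π0 g + d := by
  simp only [softV, Real.exp_add, ← mul_assoc, ← sum_mul]
  rw [Real.log_mul (sum_mul_exp_pos_s16 hπ0 hπ0_sum g).ne' (Real.exp_ne_zero d), Real.log_exp]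

lemma softV_le_softV_add (hπ0 : ∀ a, 0 ≤ π0 a) (hπ0_sum : 0 < ∑ a, π0 a) {d : ℝ}
    (hgh : ∀ a, g a ≤ h a + d) : softV π0 g ≤ softV π0 h + d :=
  (softV_mono hπ0 hπ0_sum hgh).trans_eq (softV_add_const hπ0 hπ0_sum h d)

end SoftValue

section SoftBellman

variable {S A : Type*} [Fintype S] [Fintype A]

/-- The soft Bellman optimality operator of the kernel `p`, discount `γ`, prior policy `π0` and
reward `r`, at inverse temperature `1`. -/
noncomputable def softBellman (p : S → A → S → ℝ) (γ : ℝ) (π0 r Q : S → A → ℝ) : S → A → ℝ :=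
  fun s a => r s a + γ * ∑ s', p s a s' * softV (π0 s') (Q s')

/-- `Q` is an optimal soft Q-function for the reward `r`, encoded as a solution of the soft Bellman
optimality equation. -/
def IsOptimalSoftQ (p : S → A → S → ℝ) (γ : ℝ) (π0 r Q : S → A → ℝ) : Prop :=
  ∀ s a, Q s a = softBellman p γ π0 r Q s a

variable {p : S → A → S → ℝ} {γ : ℝ} {π0 r₁ r₂ Q₁ Q₂ : S → A → ℝ}

lemma softBellman_mono_reward (hr : r₁ ≤ r₂) (Q : S → A → ℝ) :
    softBellman p γ π0 r₁ Q ≤ softBellman p γ π0 r₂ Q :=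
  fun s a => by unfold softBellman; gcongr; exact hr s a

lemma softBellman_le_softBellman_add (hp_nonneg : ∀ s a s', 0 ≤ p s a s')
    (hp_sum : ∀ s a, ∑ s', p s a s' ≤ 1) (hγ0 : 0 ≤ γ) (hπ0_nonneg : ∀ s a, 0 ≤ π0 s a)
    (hπ0_sum : ∀ s, 0 < ∑ a, π0 s a) (r : S → A → ℝ) {d : ℝ} (hd : 0 ≤ d)
    (hQ : ∀ s a, Q₁ s a ≤ Q₂ s a + d) (s : S) (a : A) :
    softBellman p γ π0 r Q₁ s a ≤ softBellman p γ π0 r Q₂ s a + γ * d := by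
  unfold softBellman
  rw [add_assoc, ← mul_add]
  gcongr
  exact sum_mul_le_sum_mul_add (hp_nonneg s a) (hp_sum s a) hd fun s' =>
    softV_le_softV_add (hπ0_nonneg s') (hπ0_sum s') (hQ s')

theorem le_of_le_softBellman_of_softBellman_le (hp_nonneg : ∀ s a s', 0 ≤ p s a s')
    (hp_sum : ∀ s a, ∑ s', p s a s' ≤ 1) (hγ0 : 0 ≤ γ) (hγ1 : γ < 1)
    (hπ0_nonneg : ∀ s a, 0 ≤ π0 s a) (hπ0_sum : ∀ s, 0 < ∑ a, π0 s a) {r : S → A → ℝ}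
    (h₁ : Q₁ ≤ softBellman p γ π0 r Q₁) (h₂ : softBellman p γ π0 r Q₂ ≤ Q₂) : Q₁ ≤ Q₂ := by
  suffices h : Function.uncurry Q₁ ≤ Function.uncurry Q₂ from fun s a => h (s, a)
  refine le_of_forall_le_add_imp_le_add_mul hγ1 (Set.finite_range _).bddAbove ?_
  rintro d hd hQ ⟨s, a⟩
  calc Q₁ s a
      ≤ softBellman p γ π0 r Q₁ s a := h₁ s a
    _ ≤ softBellman p γ π0 r Q₂ s a + γ * d :=
        softBellman_le_softBellman_add hp_nonneg hp_sum hγ0 hπ0_nonneg hπ0_sum r hd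
          (fun s a => hQ (s, a)) s a
    _ ≤ Q₂ s a + γ * d := by gcongr; exact h₂ s a

theorem IsOptimalSoftQ.mono_reward (hQ₁ : IsOptimalSoftQ p γ π0 r₁ Q₁)
    (hp_nonneg : ∀ s a s', 0 ≤ p s a s') (hp_sum : ∀ s a, ∑ s', p s a s' ≤ 1) (hγ0 : 0 ≤ γ)
    (hγ1 : γ < 1) (hπ0_nonneg : ∀ s a, 0 ≤ π0 s a) (hπ0_sum : ∀ s, 0 < ∑ a, π0 s a)
    (hr : r₁ ≤ r₂) (hQ₂ : IsOptimalSoftQ p γ π0 r₂ Q₂) : Q₁ ≤ Q₂ :=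
  le_of_le_softBellman_of_softBellman_le hp_nonneg hp_sum hγ0 hγ1 hπ0_nonneg hπ0_sum
    (fun s a => (hQ₁ s a).trans_le (softBellman_mono_reward hr Q₁ s a)) fun s a => (hQ₂ s a).ge

end SoftBellman

theorem or_and_composition_entreg_rl_general
    {S A ι : Type*} [Fintype S] [Fintype A] [Nonempty ι]
    {p : S → A → S → ℝ} (hp_nonneg : ∀ s a s', 0 ≤ p s a s') (hp_sum : ∀ s a, ∑ s', p s a s' ≤ 1)
    {γ : ℝ} (hγ0 : 0 ≤ γ) (hγ1 : γ < 1)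
    {π0 : S → A → ℝ} (hπ0_nonneg : ∀ s a, 0 ≤ π0 s a) (hπ0_sum : ∀ s, 0 < ∑ a, π0 s a)
    {r Q : ι → S → A → ℝ} (hQ : ∀ k, IsOptimalSoftQ p γ π0 (r k) (Q k))
    (hr_above : ∀ s a, BddAbove (Set.range fun k => r k s a))
    (hr_below : ∀ s a, BddBelow (Set.range fun k => r k s a))
    {Qt Qt' : S → A → ℝ} (hQt : IsOptimalSoftQ p γ π0 (fun s a => ⨆ k, r k s a) Qt)
    (hQt' : IsOptimalSoftQ p γ π0 (fun s a => ⨅ k, r k s a) Qt') :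
    (∀ s a, (⨆ k, Q k s a) ≤ Qt s a) ∧ (∀ s a, Qt' s a ≤ ⨅ k, Q k s a) := by
  have hQ_le_Qt (k) : Q k ≤ Qt :=
    (hQ k).mono_reward hp_nonneg hp_sum hγ0 hγ1 hπ0_nonneg hπ0_sum
      (fun s a => le_ciSup (hr_above s a) k) hQt
  have hQt'_le_Q (k) : Qt' ≤ Q k :=
    hQt'.mono_reward hp_nonneg hp_sum hγ0 hγ1 hπ0_nonneg hπ0_sum
      (fun s a => ciInf_le (hr_below s a) k) (hQ k)
  exact ⟨fun s a => ciSup_le fun k => hQ_le_Qt k s a, fun s a => le_ciInf fun k => hQt'_le_Q k s a⟩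

/-- **OR and AND compositions, entropy-regularized RL.** -/
theorem or_and_composition_entreg_rl
    {S A : Type*} [Fintype S] [Fintype A] [Nonempty S] [Nonempty A]
    (p : S → A → S → ℝ)
    (hp_nonneg : ∀ s a s', 0 ≤ p s a s')
    (hp_sum : ∀ s a, ∑ s', p s a s' = 1)
    (γ : ℝ) (hγ0 : 0 < γ) (hγ1 : γ < 1)
    -- prior policy
    (π0 : S → A → ℝ)
    (hπ0_pos : ∀ s a, 0 < π0 s a)
    (hπ0_sum : ∀ s, ∑ a, π0 s a = 1)
    (M : ℕ) [NeZero M]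
    (r : Fin M → S → A → ℝ)
    -- Q k is the optimal soft Q-function for reward r k
    (Q : Fin M → S → A → ℝ)
    (hQ : ∀ k s a, Q k s a = r k s a
      + γ * ∑ s', p s a s' * softV (π0 s') (fun a' => Q k s' a'))
    -- Q̃ is the optimal soft Q-function for the OR-composite reward
    (Qt : S → A → ℝ)
    (hQt : ∀ s a, Qt s a = amax (fun k => r k s a)
      + γ * ∑ s', p s a s' * softV (π0 s') (fun a' => Qt s' a'))
    -- Q̃' is the optimal soft Q-function for the AND-composite reward
    (Qt' : S → A → ℝ)
    (hQt' : ∀ s a, Qt' s a = amin (fun k => r k s a)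
      + γ * ∑ s', p s a s' * softV (π0 s') (fun a' => Qt' s' a')) :
    (∀ s a, amax (fun k => Q k s a) ≤ Qt s a) ∧
    (∀ s a, Qt' s a ≤ amin (fun k => Q k s a)) := by
  simp only [amax, amin, sup'_univ_eq_ciSup, inf'_univ_eq_ciInf] at hQt hQt' ⊢
  exact or_and_composition_entreg_rl_general hp_nonneg (fun s a => (hp_sum s a).le) hγ0.le hγ1
    (fun s a => (hπ0_pos s a).le) (fun s => one_pos.trans_eq (hπ0_sum s).symm) hQ
    (fun _ _ => Set.finite_range _ |>.bddAbove) (fun _ _ => Set.finite_range _ |>.bddBelow)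
    hQt hQt'
end
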